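/- If (L,N) is graphically admissible, then A and Y are not adjacent in H^1. -/

import Mathlib

open Relation Set

namespace CausalGraph

variable {V : Type*} [Fintype V] [DecidableEq V]

/-- `p` is a path in the undirected sense from `u` to `v` along adjacency `Adj`:
a nonempty list of pairwise distinct vertices, consecutive ones adjacent,
starting at `u` and ending at `v`. -/
def IsPath (Adj : V → V → Prop) (u v : V) (p : List V) : Prop :=
  List.Chain' Adj p ∧ p.head? = some u ∧ p.getLast? = some v ∧ p.Nodup

/-- Ancestors of `S` in the digraph `D` (every vertex is an ancestor of itself). -/
def anc (D : V → V → Prop) (S : Set V) : Set V :=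
  {u | ∃ v ∈ S, Relation.ReflTransGen D u v}

/-- Descendants of `S` in the digraph `D` (every vertex is a descendant of itself). -/
def desc (D : V → V → Prop) (S : Set V) : Set V :=
  {u | ∃ v ∈ S, Relation.ReflTransGen D v u}

/-- Parents of vertices of `S` in the digraph `D`. -/
def parents (D : V → V → Prop) (S : Set V) : Set V :=
  {u | ∃ v ∈ S, D u v}

/-- The digraph `D` is acyclic. -/
def Acyclic (D : V → V → Prop) : Prop :=
  ∀ u v, D u v → ¬ Relation.ReflTransGen D v u

/-- Vertices other than `A` lying on a directed path from `A` to `Y`. -/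
def cn (D : V → V → Prop) (A Y : V) : Set V :=
  {v | v ≠ A ∧ Relation.ReflTransGen D A v ∧ Relation.ReflTransGen D v Y}

/-- The forbidden set. -/
def forb (D : V → V → Prop) (A Y : V) : Set V :=
  desc D (cn D A Y) ∪ {A}

/-- Proper back-door graph: delete every edge from `A` into `cn D A Y`. -/
def pbd (D : V → V → Prop) (A Y : V) : V → V → Prop :=
  fun u v => D u v ∧ ¬(u = A ∧ v ∈ cn D A Y)

/-- `y` is an interior vertex of the list `p` with neighbours `x` and `z` on the path. -/
def InteriorAt (p : List V) (x y z : V) : Prop :=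
  ∃ s t : List V, p = s ++ x :: y :: z :: t

/-- The path `p` is blocked by `Z` in the digraph `D`: some interior non-collider
lies in `Z`, or some interior collider has no descendant in `Z`. -/
def Blocked (D : V → V → Prop) (Z : Set V) (p : List V) : Prop :=
  (∃ x y z, InteriorAt p x y z ∧ ¬(D x y ∧ D z y) ∧ y ∈ Z) ∨
  (∃ x y z, InteriorAt p x y z ∧ (D x y ∧ D z y) ∧ ∀ d ∈ desc D {y}, d ∉ Z)

/-- d-separation of `S` and `T` given `Z` in the digraph `D`. -/
def DSep (D : V → V → Prop) (S T Z : Set V) : Prop :=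
  ∀ s ∈ S, ∀ t ∈ T, ∀ p : List V,
    IsPath (fun a b => D a b ∨ D b a) s t p → Blocked D Z p

/-- Moral graph of the subgraph of the digraph `D` induced on `Vs`. -/
def moral (D : V → V → Prop) (Vs : Set V) : SimpleGraph V :=
  SimpleGraph.fromRel (fun u v =>
    u ∈ Vs ∧ v ∈ Vs ∧ (D u v ∨ D v u ∨ ∃ w ∈ Vs, D u w ∧ D v w))

/-- Separation in an undirected graph: every path from `S` to `T` meets `W`. -/
def USep (H : SimpleGraph V) (S T W : Set V) : Prop :=
  ∀ s ∈ S, ∀ t ∈ T, ∀ p : List V, IsPath H.Adj s t p → ∃ z ∈ W, z ∈ p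

/-- `Z` is an `A`–`Y` cut in an undirected graph `H` with vertex set `Vs`. -/
def IsCut (Vs : Set V) (H : SimpleGraph V) (A Y : V) (Z : Set V) : Prop :=
  Z ⊆ Vs ∧ Z ∩ {A, Y} = ∅ ∧ ∀ p : List V, IsPath H.Adj A Y p → ∃ z ∈ Z, z ∈ p

def MinimalCut (Vs : Set V) (H : SimpleGraph V) (A Y : V) (Z : Set V) : Prop :=
  IsCut Vs H A Y Z ∧ ∀ Z' ⊂ Z, ¬ IsCut Vs H A Y Z'

def MinimumCut (Vs : Set V) (H : SimpleGraph V) (A Y : V) (Z : Set V) : Prop :=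
  IsCut Vs H A Y Z ∧ ∀ Z', IsCut Vs H A Y Z' → Z.ncard ≤ Z'.ncard

/-- Connected component of `y` in `H` restricted to the complement of `U`:
vertices reachable from `y` by paths avoiding `U`. -/
def cc (H : SimpleGraph V) (U : Set V) (y : V) : Set V :=
  {w | ∃ p : List V, IsPath H.Adj y w p ∧ ∀ x ∈ p, x ∉ U}

/-- Boundary of `S` in `H`: vertices outside `S` adjacent to some vertex of `S`. -/
def bdry (H : SimpleGraph V) (S : Set V) : Set V :=
  {v | v ∉ S ∧ ∃ u ∈ S, H.Adj v u}

/-- The partial order `Z₁ ⊴_H Z₂` between `A`–`Y` cuts. -/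
def TLE (H : SimpleGraph V) (A Y : V) (Z₁ Z₂ : Set V) : Prop :=
  USep H {Y} (Z₂ \ Z₁) Z₁ ∧ USep H {A} (Z₁ \ Z₂) Z₂

/-- Ancestors of `{A, Y} ∪ L`. -/
def ancAYL (D : V → V → Prop) (A Y : V) (L : Set V) : Set V :=
  anc D ({A, Y} ∪ L)

/-- The moral graph `H⁰` of the proper back-door graph induced on `an_G({A,Y} ∪ L)`. -/
def H0 (D : V → V → Prop) (A Y : V) (L : Set V) : SimpleGraph V :=
  moral (pbd D A Y) (ancAYL D A Y L)

/-- The set of vertices removed from `H⁰` when constructing `H¹`. -/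
def Ignore (D : V → V → Prop) (A Y : V) (L N : Set V) : Set V :=
  (ancAYL D A Y L \ {A, Y}) ∩ ((Set.univ \ N) ∪ forb D A Y)

/-- Vertex set of `H¹`. -/
def H1verts (D : V → V → Prop) (A Y : V) (L N : Set V) : Set V :=
  ancAYL D A Y L \ Ignore D A Y L N

/-- The non-parametric adjustment efficiency graph `H¹`: delete the vertices of
`Ignore`, join two remaining vertices if they are joined in `H⁰` by a path all of
whose intermediate vertices are in `Ignore`, and join `A` and `Y` to every vertex
of `L`. -/
def H1 (D : V → V → Prop) (A Y : V) (L N : Set V) : SimpleGraph V :=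
  SimpleGraph.fromRel (fun u v =>
    u ∈ H1verts D A Y L N ∧ v ∈ H1verts D A Y L N ∧
      ((∃ p : List V, IsPath (H0 D A Y L).Adj u v p ∧
          ∀ x ∈ p, x ≠ u → x ≠ v → x ∈ Ignore D A Y L N) ∨
        (u = A ∧ v ∈ L) ∨ (u = Y ∧ v ∈ L)))

/-- The graphical adjustment criterion for `A, Y, L, N` in the DAG `D`. -/
def GAC (D : V → V → Prop) (A Y : V) (L N Z : Set V) : Prop :=
  DSep (pbd D A Y) {A} {Y} Z ∧ Z ∩ forb D A Y = ∅ ∧ L ⊆ Z ∧ Z ⊆ N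

def MinimalGAC (D : V → V → Prop) (A Y : V) (L N Z : Set V) : Prop :=
  GAC D A Y L N Z ∧ ∀ Z' ⊂ Z, ¬ GAC D A Y L N Z'

def MinimumGAC (D : V → V → Prop) (A Y : V) (L N Z : Set V) : Prop :=
  GAC D A Y L N Z ∧ ∀ Z', GAC D A Y L N Z' → Z.ncard ≤ Z'.ncard

/-- Graphical admissibility of the pair `(L, N)`. -/
def Admissible (D : V → V → Prop) (A Y : V) (L N : Set V) : Prop :=
  ∃ Z, GAC D A Y L N Z

end CausalGraph

namespace CausalGraph

/-!
The theorem rests on the moralization criterion: if `Z` d-separates `S` from `T` in a digraph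
without 2-cycles, then `Z` separates `S` from `T` in the moral graph on any set of ancestors of
`S ∪ T ∪ Z`. To see this, follow a moral path that avoids `Z` from `T` towards `S` and carry along
a path to `T` that is not blocked by `Z`. The one obstacle to prolonging it by an arrow into its
first vertex `v` is that `v` may be a collider without descendants in `Z`. Then `v` is an ancestor
of `T` or `S`, and no vertex on a directed path from `v` is in `Z`: a directed path from `v` to `T`
can replace the old path, while a directed path from `v` to `S` d-connects `S` with `T`.

A set `Z` satisfying the adjustment criterion contains `L`, so the criterion applies to `H⁰`. An
edge between `A` and `Y` in `H¹` comes from a path in `H⁰` with all interior vertices in the ignored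
set, which is disjoint from `Z`: such a path violates the separation.
-/

section IsPath

variable {V : Type*} {r r' : V → V → Prop} {u v w : V} {p : List V}

theorem isPath_singleton (r : V → V → Prop) (v : V) : IsPath r v v [v] :=
  ⟨.singleton v, rfl, rfl, List.nodup_singleton v⟩

theorem IsPath.eq_cons (hp : IsPath r u v p) : ∃ q, p = u :: q :=
  List.head?_eq_some_iff.mp hp.2.1

theorem IsPath.mono (h : ∀ a b, r a b → r' a b) (hp : IsPath r u v p) : IsPath r' u v p :=
  ⟨List.IsChain.imp h hp.1, hp.2⟩

theorem IsPath.reverse [Std.Symm r] (hp : IsPath r u v p) : IsPath r v u p.reverse := by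
  obtain ⟨hchain, hhead, hlast, hnodup⟩ := hp
  exact ⟨List.isChain_reverse.mpr (List.IsChain.imp (fun _ _ => symm_of r) hchain),
    by rwa [List.head?_reverse], by rwa [List.getLast?_reverse], List.nodup_reverse.mpr hnodup⟩

theorem IsPath.cons (hp : IsPath r u v p) (hw : r w u) (hwp : w ∉ p) : IsPath r w v (w :: p) := by
  obtain ⟨q, rfl⟩ := hp.eq_cons
  obtain ⟨hchain, -, hlast, hnodup⟩ := hp
  exact ⟨hchain.cons_cons hw, rfl, hlast, List.nodup_cons.mpr ⟨hwp, hnodup⟩⟩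

theorem IsPath.exists_suffix (hp : IsPath r u v p) (hw : w ∈ p) :
    ∃ q, w :: q <:+ p ∧ IsPath r w v (w :: q) := by
  obtain ⟨s, q, rfl⟩ := List.mem_iff_append.mp hw
  have hsuffix : w :: q <:+ s ++ w :: q := List.suffix_append s (w :: q)
  exact ⟨q, hsuffix, List.IsChain.suffix hp.1 hsuffix, rfl,
    List.getLast?_append_cons s w q ▸ hp.2.2.1, hp.2.2.2.sublist hsuffix.sublist⟩

theorem IsPath.reflTransGen_of_mem (hp : IsPath r u v p) (hw : w ∈ p) : ReflTransGen r u w := by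
  obtain ⟨q, rfl⟩ := hp.eq_cons
  exact List.IsChain.induction (ReflTransGen r u) _ hp.1 (fun _ _ hab hua => hua.tail hab)
    (fun _ => .refl) w hw

theorem exists_isPath_of_reflTransGen (h : ReflTransGen r u v) : ∃ p, IsPath r u v p := by
  induction h using ReflTransGen.head_induction_on with
  | refl => exact ⟨[v], isPath_singleton r v⟩
  | @head a c hac _ ih =>
    obtain ⟨p, hp⟩ := ih
    by_cases ha : a ∈ p
    · obtain ⟨q, -, hq⟩ := hp.exists_suffix ha
      exact ⟨a :: q, hq⟩
    · exact ⟨a :: p, hp.cons hac ha⟩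

end IsPath

section Ancestors

variable {V : Type*} {D : V → V → Prop} {S T : Set V} {u v : V}

theorem subset_anc (D : V → V → Prop) (S : Set V) : S ⊆ anc D S :=
  fun v hv => ⟨v, hv, .refl⟩

theorem anc_mono (h : S ⊆ T) : anc D S ⊆ anc D T :=
  fun _ ⟨v, hv, huv⟩ => ⟨v, h hv, huv⟩

theorem mem_anc_of_reflTransGen (huv : ReflTransGen D u v) (hv : v ∈ anc D S) : u ∈ anc D S := by
  obtain ⟨s, hs, hvs⟩ := hv
  exact ⟨s, hs, huv.trans hvs⟩

theorem anc_union (D : V → V → Prop) (S T : Set V) : anc D (S ∪ T) = anc D S ∪ anc D T := by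
  ext u
  simp only [anc, mem_union, mem_ofPred_eq, or_and_right, exists_or]

end Ancestors

section Blocked

variable {V : Type*} {D : V → V → Prop} {Z : Set V} {p q : List V} {v x : V}

theorem not_blocked_iff : ¬Blocked D Z p ↔ ∀ x y z, InteriorAt p x y z →
    (D x y → D z y → y ∈ anc D Z) ∧ (y ∈ Z → D x y ∧ D z y) := by
  simp only [Blocked, anc, desc, mem_ofPred_eq, mem_singleton_iff]
  grind

theorem interiorAt_cons_iff {a x y z : V} :
    InteriorAt (a :: p) x y z ↔ (∃ t, a :: p = x :: y :: z :: t) ∨ InteriorAt p x y z := by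
  constructor
  · rintro ⟨_ | ⟨b, s⟩, t, h⟩
    · exact .inl ⟨t, h⟩
    · exact .inr ⟨s, t, (List.cons.inj h).2⟩
  · rintro (⟨t, h⟩ | ⟨s, t, rfl⟩)
    · exact ⟨[], t, h⟩
    · exact ⟨a :: s, t, rfl⟩

theorem Blocked.of_suffix (hqp : q <:+ p) (hq : Blocked D Z q) : Blocked D Z p := by
  have hInt : ∀ x y z, InteriorAt q x y z → InteriorAt p x y z := by
    rintro x y z ⟨s, t, rfl⟩
    obtain ⟨s', rfl⟩ := hqp
    exact ⟨s' ++ s, t, (List.append_assoc ..).symm⟩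
  exact hq.imp (fun ⟨x, y, z, hxyz, h⟩ => ⟨x, y, z, hInt x y z hxyz, h⟩)
    (fun ⟨x, y, z, hxyz, h⟩ => ⟨x, y, z, hInt x y z hxyz, h⟩)

theorem not_blocked_singleton (D : V → V → Prop) (Z : Set V) (v : V) : ¬Blocked D Z [v] := by
  rw [not_blocked_iff]
  rintro x y z ⟨s, t, h⟩
  simp [List.cons_eq_append_iff] at h

theorem not_blocked_cons (hp : ¬Blocked D Z (v :: q))
    (hv : ∀ y ∈ q.head?, (D x v → D y v → v ∈ anc D Z) ∧ (v ∈ Z → D x v ∧ D y v)) :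
    ¬Blocked D Z (x :: v :: q) := by
  rw [not_blocked_iff] at hp ⊢
  intro a b c h
  obtain ⟨t, h⟩ | h := interiorAt_cons_iff.mp h
  · obtain ⟨rfl, rfl, rfl⟩ : x = a ∧ v = b ∧ q = c :: t := by simpa using h
    exact hv c rfl
  · exact hp a b c h

theorem not_blocked_of_isChain [Std.Asymm D] (hp : List.IsChain D (x :: p))
    (hZ : ∀ y ∈ p, y ∉ Z) : ¬Blocked D Z (x :: p) := by
  induction p generalizing x with
  | nil => exact not_blocked_singleton D Z x
  | cons v q ih =>
    obtain ⟨hvZ, hqZ⟩ := List.forall_mem_cons.mp hZ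
    refine not_blocked_cons (ih hp.of_cons hqZ) fun y hy => ⟨fun _ hyv => ?_, fun hv => ?_⟩
    · exact absurd hyv (asymm_of D (List.isChain_cons.mp hp.of_cons |>.1 y hy))
    · exact absurd hv hvZ

end Blocked

section DConnected

variable {V : Type*} {D : V → V → Prop} {Z S T Vs : Set V} {u v x : V} {p : List V}

theorem moral_adj_iff : (moral D Vs).Adj u v ↔
    u ≠ v ∧ u ∈ Vs ∧ v ∈ Vs ∧ (D u v ∨ D v u ∨ ∃ w ∈ Vs, D u w ∧ D v w) := by
  rw [moral, SimpleGraph.fromRel_adj]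
  grind

/-- `v` is d-connected to `T` given `Z`: some path from `v` to a vertex of `T` is not blocked
by `Z`. This is the negation of d-separation of `{v}` and `T`. -/
def DConnected (D : V → V → Prop) (Z T : Set V) (v : V) : Prop :=
  ∃ t ∈ T, ∃ p, IsPath (fun a b => D a b ∨ D b a) v t p ∧ ¬Blocked D Z p

/-- `v` is d-connected to `T` given `Z` by a path that, when `v ∈ Z`, leaves `v` against an arrow
into `v`. Prepending a parent of `v` to such a path can only create a block at `v` if `v` is a
collider without descendants in `Z`. -/
def ParentExtendable (D : V → V → Prop) (Z T : Set V) (v : V) : Prop :=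
  ∃ t ∈ T, ∃ q, IsPath (fun a b => D a b ∨ D b a) v t (v :: q) ∧ ¬Blocked D Z (v :: q) ∧
    (v ∈ Z → ∀ y ∈ q.head?, D y v)

theorem dConnected_of_mem (hv : v ∈ T) : DConnected D Z T v :=
  ⟨v, hv, [v], isPath_singleton _ v, not_blocked_singleton D Z v⟩

theorem dConnected_of_not_blocked_cons {t : V} (ht : t ∈ T)
    (hp : IsPath (fun a b => D a b ∨ D b a) v t p) (hx : D x v ∨ D v x)
    (hxp : ¬Blocked D Z (x :: p)) : DConnected D Z T x := by
  by_cases hmem : x ∈ p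
  · obtain ⟨q, hqp, hq⟩ := hp.exists_suffix hmem
    exact ⟨t, ht, x :: q, hq, fun hb => hxp (hb.of_suffix (hqp.trans (List.suffix_cons x p)))⟩
  · exact ⟨t, ht, x :: p, hp.cons hx hmem, hxp⟩

theorem DConnected.parentExtendable (h : DConnected D Z T v) (hv : v ∉ Z) :
    ParentExtendable D Z T v := by
  obtain ⟨t, ht, p, hp, hpZ⟩ := h
  obtain ⟨q, rfl⟩ := hp.eq_cons
  exact ⟨t, ht, q, hp, hpZ, fun hvZ => absurd hvZ hv⟩

theorem ParentExtendable.dConnected (h : ParentExtendable D Z T v) : DConnected D Z T v := by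
  obtain ⟨t, ht, q, hq, hqZ, -⟩ := h
  exact ⟨t, ht, v :: q, hq, hqZ⟩

theorem ParentExtendable.parent (h : ParentExtendable D Z T v) (hv : v ∈ anc D Z) (hxv : D x v) :
    DConnected D Z T x := by
  obtain ⟨t, ht, q, hq, hqZ, hhead⟩ := h
  exact dConnected_of_not_blocked_cons ht hq (.inl hxv)
    (not_blocked_cons hqZ fun y hy => ⟨fun _ _ => hv, fun hvZ => ⟨hxv, hhead hvZ y hy⟩⟩)

theorem DConnected.child [Std.Asymm D] (h : DConnected D Z T u) (hu : u ∉ Z) (huv : D u v) :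
    ParentExtendable D Z T v := by
  obtain ⟨t, ht, p, hp, hpZ⟩ := h
  obtain ⟨q, rfl⟩ := hp.eq_cons
  have hvu : ¬D v u := asymm_of D huv
  by_cases hv : v ∈ u :: q
  -- Cut the path at `v`. If `v ∈ Z` is not its endpoint, `v` was a collider on it, so the remaining
  -- path still starts against an arrow into `v`.
  · obtain ⟨q', ⟨s, hs⟩, hq'⟩ := hp.exists_suffix hv
    refine ⟨t, ht, q', hq', fun hb => hpZ (hb.of_suffix ⟨s, hs⟩), fun hvZ y hy => ?_⟩
    obtain ⟨r, rfl⟩ := List.head?_eq_some_iff.mp hy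
    obtain rfl | ⟨s, x, rfl⟩ := s.eq_nil_or_concat
    · exact absurd (List.cons.inj hs).1 fun hv_eq => hvu (hv_eq ▸ huv)
    · have hxvy : InteriorAt (u :: q) x v y := ⟨s, r, by rw [← hs, List.concat_append]⟩
      exact ((not_blocked_iff.mp hpZ x v y hxvy).2 hvZ).2
  · refine ⟨t, ht, u :: q, hp.cons (.inr huv) hv, not_blocked_cons hpZ fun y _ => ?_, ?_⟩
    · exact ⟨fun h => absurd h hvu, fun h => absurd h hu⟩
    · rintro - y ⟨⟩
      exact huv

theorem DConnected.of_reflTransGen [Std.Asymm D] (h : DConnected D Z T u)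
    (huv : ReflTransGen D u v) (hu : u ∉ anc D Z) : DConnected D Z T v := by
  induction huv with
  | refl => exact h
  | @tail b c hub hbc ih =>
    have hb : b ∉ Z := fun hb => hu ⟨b, hb, hub⟩
    exact (ih.child hb hbc).dConnected

theorem dConnected_of_parent_of_mem_anc [Std.Asymm D] (hv : v ∈ anc D T) (hvZ : v ∉ anc D Z)
    (hxv : D x v) : DConnected D Z T x := by
  obtain ⟨t, ht, hvt⟩ := hv
  obtain ⟨p, hp⟩ := exists_isPath_of_reflTransGen hvt
  have hchain : List.IsChain D (x :: p) := by
    obtain ⟨q, rfl⟩ := hp.eq_cons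
    exact hp.1.cons_cons hxv
  have hpZ : ∀ y ∈ p, y ∉ Z := fun y hy hyZ => hvZ ⟨y, hyZ, hp.reflTransGen_of_mem hy⟩
  exact dConnected_of_not_blocked_cons ht (hp.mono fun _ _ => .inl) (.inl hxv)
    (not_blocked_of_isChain hchain hpZ)

theorem ParentExtendable.parent_of_forall_not_dConnected [Std.Asymm D]
    (hST : ∀ s ∈ S, ¬DConnected D Z T s) (hv : v ∈ anc D (S ∪ T ∪ Z))
    (h : ParentExtendable D Z T v) (hxv : D x v) : DConnected D Z T x := by
  by_cases hvZ : v ∈ anc D Z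
  · exact h.parent hvZ hxv
  rw [anc_union, anc_union] at hv
  obtain (⟨s, hs, hvs⟩ | hvT) | hvZ' := hv
  · exact absurd (h.dConnected.of_reflTransGen hvs hvZ) (hST s hs)
  · exact dConnected_of_parent_of_mem_anc hvT hvZ hxv
  · exact absurd hvZ' hvZ

theorem DConnected.of_moral_adj [Std.Asymm D] (hVs : Vs ⊆ anc D (S ∪ T ∪ Z))
    (hST : ∀ s ∈ S, ¬DConnected D Z T s) (h : DConnected D Z T u) (hu : u ∉ Z)
    (huv : (moral D Vs).Adj u v) : DConnected D Z T v := by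
  obtain ⟨-, huVs, -, huv | hvu | ⟨w, hw, huw, hvw⟩⟩ := moral_adj_iff.mp huv
  · exact (h.child hu huv).dConnected
  · exact (h.parentExtendable hu).parent_of_forall_not_dConnected hST (hVs huVs) hvu
  · exact (h.child hu huw).parent_of_forall_not_dConnected hST (hVs hw) hvw

theorem DSep.uSep_moral [Std.Asymm D] (h : DSep D S T Z) (hVs : Vs ⊆ anc D (S ∪ T ∪ Z)) :
    USep (moral D Vs) S T Z := by
  have hST : ∀ s ∈ S, ¬DConnected D Z T s :=
    fun s hs ⟨t, ht, p, hp, hpZ⟩ => hpZ (h s hs t ht p hp)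
  intro s hs t ht p ⟨hchain, hhead, hlast, _⟩
  by_contra! hpZ
  have hconn : ∀ v ∈ p, DConnected D Z T v := by
    refine List.IsChain.backwards_induction _ p (List.IsChain.iff_mem.mp hchain) ?_ fun hne => ?_
    · rintro a b ⟨-, hb, hab⟩ hbT
      exact hbT.of_moral_adj hVs hST (fun hbZ => hpZ b hbZ hb) hab.symm
    · rw [List.getLast_of_getLast?_eq_some hlast]
      exact dConnected_of_mem ht
  exact hST s hs (hconn s (List.mem_of_head? hhead))

end DConnected

section Adjustment

variable {V : Type*} {D : V → V → Prop} {A Y : V} {L N S Z : Set V}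

theorem Acyclic.asymm (h : Acyclic D) : Std.Asymm D :=
  ⟨fun u v huv hvu => h u v huv (.single hvu)⟩

instance [Std.Asymm D] : Std.Asymm (pbd D A Y) :=
  ⟨fun _ _ huv hvu => asymm_of D huv.1 hvu.1⟩

-- Only edges out of `A` are deleted, so the part of a directed path before `A` survives.
theorem anc_subset_anc_pbd (hA : A ∈ S) : anc D S ⊆ anc (pbd D A Y) S := by
  rintro u ⟨s, hs, hus⟩
  induction hus using ReflTransGen.head_induction_on with
  | refl => exact subset_anc _ S hs
  | @head a c hac _ ih =>
    by_cases ha : a = A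
    · exact subset_anc _ S (ha ▸ hA)
    · exact mem_anc_of_reflTransGen (.single ⟨hac, fun h => ha h.1⟩) ih

theorem GAC.notMem_of_mem_forb {v : V} (h : GAC D A Y L N Z) (hv : v ∈ forb D A Y) : v ∉ Z :=
  fun hvZ => (h.2.1.subset ⟨hvZ, hv⟩ : v ∈ (∅ : Set V))

theorem GAC.left_notMem (h : GAC D A Y L N Z) : A ∉ Z :=
  h.notMem_of_mem_forb (.inr rfl)

theorem GAC.right_notMem (h : GAC D A Y L N Z) (hne : A ≠ Y) (hAY : ReflTransGen D A Y) : Y ∉ Z :=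
  h.notMem_of_mem_forb (.inl ⟨Y, ⟨hne.symm, hAY, .refl⟩, .refl⟩)

theorem GAC.notMem_of_mem_ignore {v : V} (h : GAC D A Y L N Z) (hv : v ∈ Ignore D A Y L N) :
    v ∉ Z := by
  obtain ⟨-, ⟨-, hvN⟩ | hv⟩ := hv
  · exact fun hvZ => hvN (h.2.2.2 hvZ)
  · exact h.notMem_of_mem_forb hv

theorem GAC.uSep_H0 [Std.Asymm D] (h : GAC D A Y L N Z) : USep (H0 D A Y L) {A} {Y} Z := by
  obtain ⟨hsep, -, hLZ, -⟩ := h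
  refine hsep.uSep_moral ?_
  calc
    ancAYL D A Y L ⊆ anc (pbd D A Y) ({A, Y} ∪ L) := anc_subset_anc_pbd (.inl (.inl rfl))
    _ ⊆ anc (pbd D A Y) ({A} ∪ {Y} ∪ Z) := anc_mono (union_subset_union_right {A, Y} hLZ)

theorem exists_isPath_H0_of_H1_adj (hA : A ∉ L) (hY : Y ∉ L) (h : (H1 D A Y L N).Adj A Y) :
    ∃ p, IsPath (H0 D A Y L).Adj A Y p ∧ ∀ x ∈ p, x ≠ A → x ≠ Y → x ∈ Ignore D A Y L N := by
  rw [H1, SimpleGraph.fromRel_adj] at h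
  obtain ⟨hne, ⟨-, -, hp | ⟨-, hYL⟩ | ⟨hAY, -⟩⟩ | ⟨-, -, ⟨p, hp, hpI⟩ | ⟨hYA, -⟩ | ⟨-, hAL⟩⟩⟩ := h
  · exact hp
  · exact absurd hYL hY
  · exact absurd hAY hne
  · have := (H0 D A Y L).symm
    refine ⟨p.reverse, hp.reverse, fun x hx hxA hxY => ?_⟩
    exact hpI x (List.mem_reverse.mp hx) hxY hxA
  · exact absurd hYA.symm hne
  · exact absurd hAL hA

end Adjustment

theorem stmt6_general {V : Type*} (D : V → V → Prop) [Std.Asymm D] (A Y : V) (L N : Set V)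
    (hAancY : ReflTransGen D A Y) (hadm : Admissible D A Y L N) : ¬(H1 D A Y L N).Adj A Y := by
  intro hadj
  obtain ⟨Z, hZ⟩ := hadm
  have hA : A ∉ Z := hZ.left_notMem
  have hY : Y ∉ Z := hZ.right_notMem hadj.ne hAancY
  have hLZ : L ⊆ Z := hZ.2.2.1
  obtain ⟨p, hp, hpI⟩ :=
    exists_isPath_H0_of_H1_adj (notMem_subset hLZ hA) (notMem_subset hLZ hY) hadj
  obtain ⟨z, hz, hzp⟩ := hZ.uSep_H0 A rfl Y rfl p hp
  have hzI : z ∈ Ignore D A Y L N :=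
    hpI z hzp (ne_of_mem_of_not_mem hz hA) (ne_of_mem_of_not_mem hz hY)
  exact hZ.notMem_of_mem_ignore hzI hz

/-- Proposition 4, part 1 (statement 6): if `(L, N)` is admissible then `A` and `Y`
are not adjacent in `H¹`. -/
theorem stmt6 {V : Type*} [Fintype V] [DecidableEq V]
    (D : V → V → Prop) (hacy : Acyclic D)
    (A Y : V) (L N : Set V)
    (hAY : A ≠ Y) (hAancY : Relation.ReflTransGen D A Y)
    (hLnd : L ∩ desc D {A} = ∅) (hLY : Y ∉ L)
    (hN : {A, Y} ∪ L ⊆ N)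
    (hadm : Admissible D A Y L N) :
    ¬ (H1 D A Y L N).Adj A Y := by
  have := hacy.asymm
  exact stmt6_general D A Y L N hAancY hadm

end CausalGraph
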